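/- Let F be a free group with an element u that is not a proper power and let p be a prime. Then F is residually p-finite with respect to the subgroup ⟨u⟩: for every g ∈ F with g ∉ ⟨u⟩, there exists a homomorphism φ from F onto a finite p-group such that φ(g) ∉ φ(⟨u⟩). -/

import Mathlib

/-- An element is not a proper power: `a = w ^ k` forces `|k| ≤ 1`. -/
def NotProperPower {G : Type} [Group G] (a : G) : Prop :=
  ∀ (w : G) (k : ℤ), a = w ^ k → k.natAbs ≤ 1

/-!
If `g` does not commute with `u`, then in a residually `p`-finite group some finite `p`-quotient
keeps the commutator of `g` and `u` nontrivial, and so separates `g` from the whole centralizer of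
`u`. In a free group, commuting elements lie in a common cyclic subgroup (the subgroup they generate
is free and commutative), so the centralizer of an element that is not a proper power is the cyclic
subgroup it generates.

That a free group is residually `p`-finite is seen on a representation made to measure for a
nonempty reduced word `c₁ ⋯ cₙ`. Let `E c` be the sum of the elementary matrices at `(k - 1, k)`
over the `k` with `cₖ = c`, and send each letter `c` to `(1 + E c) (1 + E c⁻¹)⁻¹`, a unitriangular
matrix over `ZMod p`. As the word is read from left to right, the last nonzero entry of the top row
is always a `1`, and each letter moves it one column to the right: multiplying by `(1 + E cₖ⁻¹)⁻¹`
would push it further only if `cₖ₊₁ = cₖ⁻¹`, which reducedness excludes. The whole word thus has a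
`1` in the top right corner and acts nontrivially.
-/

section Unitriangular

theorem pow_prime_pow_eq_one_of_sub_one_pow_eq_zero {R : Type*} [Ring R] (p : ℕ) [Fact p.Prime]
    [CharP R p] {x : R} {n : ℕ} (hx : (x - 1) ^ n = 0) : x ^ p ^ n = 1 := by
  have h := sub_pow_char_pow_of_commute (p := p) (n := n) (Commute.one_right x)
  rw [pow_eq_zero_of_le (Nat.lt_pow_self (Fact.out : p.Prime).one_lt).le hx, one_pow] at h
  exact sub_eq_zero.mp h.symm

variable {ι : Type*} [Fintype ι] [LinearOrder ι]

theorem mul_apply_self_of_isUpperTriangular {R : Type*} [NonUnitalNonAssocSemiring R]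
    {M N : Matrix ι ι R} (hM : M.IsUpperTriangular) (hN : N.IsUpperTriangular) (i : ι) :
    (M * N) i i = M i i * N i i := by
  rw [Matrix.mul_apply]
  refine Finset.sum_eq_single i (fun k _ hk => ?_) (by simp)
  rcases lt_or_gt_of_ne hk with h | h
  · rw [hM h, zero_mul]
  · rw [hN h, mul_zero]

variable (ι) in
/-- The monoid of upper unitriangular matrices. Its group of units is used as the group of
unitriangular matrices, which saves proving that it is closed under inversion. -/
def unitriangular (R : Type*) [Semiring R] : Submonoid (Matrix ι ι R) where
  carrier := {M | M.IsUpperTriangular ∧ ∀ i, M i i = 1}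
  one_mem' := ⟨Matrix.blockTriangular_one, fun i => Matrix.one_apply_eq i⟩
  mul_mem' := fun ⟨hM, hM'⟩ ⟨hN, hN'⟩ =>
    ⟨hM.mul hN, fun i => by rw [mul_apply_self_of_isUpperTriangular hM hN, hM', hN', one_mul]⟩

variable {R : Type*} [CommRing R]

theorem sub_one_pow_card_eq_zero_of_mem_unitriangular {M : Matrix ι ι R}
    (hM : M ∈ unitriangular ι R) : (M - 1) ^ Fintype.card ι = 0 := by
  have h := M.aeval_self_charpoly
  rw [Matrix.charpoly_of_isUpperTriangular M hM.1] at h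
  simpa [hM.2] using h

variable (p : ℕ) [Fact p.Prime] [CharP R p]

theorem unitriangular.pow_eq_one (M : unitriangular ι R) : M ^ p ^ Fintype.card ι = 1 := by
  cases isEmpty_or_nonempty ι
  · exact Subsingleton.elim _ _
  · exact Subtype.ext <| pow_prime_pow_eq_one_of_sub_one_pow_eq_zero p
      (sub_one_pow_card_eq_zero_of_mem_unitriangular M.2)

theorem unitriangular.isPGroup_units : IsPGroup p (unitriangular ι R)ˣ :=
  fun g => ⟨Fintype.card ι, Units.ext (unitriangular.pow_eq_one p (g : unitriangular ι R))⟩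

/-- A unitriangular matrix over a ring of characteristic `p`, as a unit of the monoid of such
matrices: its inverse is one of its powers. -/
def unitriangular.toUnits (M : unitriangular ι R) : (unitriangular ι R)ˣ :=
  Units.ofPowEqOne M _ (unitriangular.pow_eq_one p M) (NeZero.ne _)

end Unitriangular

section WordRepresentation

open Matrix

variable {n : ℕ} {β : Type*} [DecidableEq β] {R : Type*}

variable (R) in
/-- The transition matrix of the letter `c` for the path labelled `ℓ 0, ..., ℓ (n - 1)`: the sum of
the elementary matrices at `(k, k + 1)` over the positions `k` labelled `c`. -/
def edgeMatrix [Semiring R] (ℓ : Fin n → β) (c : β) :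
    Matrix (Fin (n + 1)) (Fin (n + 1)) R :=
  ∑ k with ℓ k = c, single k.castSucc k.succ 1

theorem one_add_edgeMatrix_mem_unitriangular [Semiring R] (ℓ : Fin n → β) (c : β) :
    1 + edgeMatrix R ℓ c ∈ unitriangular (Fin (n + 1)) R := by
  refine ⟨blockTriangular_one.add ?_, fun i => ?_⟩
  · exact sum_mem (S := blockTriangularSubsemiring R id) fun k _ =>
      blockTriangular_single k.castSucc_lt_succ.le 1
  · rw [Matrix.add_apply, one_apply_eq, edgeMatrix, Matrix.sum_apply, Finset.sum_eq_zero, add_zero]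
    rintro k -
    refine single_apply_of_ne _ _ _ _ _ ?_
    rintro ⟨rfl, h⟩
    exact k.castSucc_lt_succ.ne' h

theorem vecMul_one_add_edgeMatrix_succ [Semiring R] (ℓ : Fin n → β) (c : β)
    (v : Fin (n + 1) → R) (j : Fin n) :
    (v ᵥ* (1 + edgeMatrix R ℓ c)) j.succ = v j.succ + if ℓ j = c then v j.castSucc else 0 := by
  have hsingle (k : Fin n) :
      (v ᵥ* single k.castSucc k.succ 1) j.succ = if k = j then v k.castSucc else 0 := by
    simp [vecMul_apply_eq_sum, single_apply, ite_and]
  rw [vecMul_add, vecMul_one, Pi.add_apply, edgeMatrix, vecMul_sum, Finset.sum_apply]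
  simp only [hsingle, Finset.sum_ite_eq', Finset.mem_filter_univ]

/-- The last nonzero entry of `v` is a `1`, in position `t`. -/
def LastNonzeroIsOneAt [Zero R] [One R] (v : Fin (n + 1) → R) (t : Fin (n + 1)) : Prop :=
  v t = 1 ∧ ∀ j, t < j → v j = 0

theorem LastNonzeroIsOneAt.succ [Semiring R] {ℓ : Fin n → β} {d : β} {v w : Fin (n + 1) → R}
    {t : Fin n} (hv : LastNonzeroIsOneAt v t.castSucc)
    (hvw : w ᵥ* (1 + edgeMatrix R ℓ d) = v ᵥ* (1 + edgeMatrix R ℓ (ℓ t)))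
    (hd : ℓ t ≠ d) (hd' : ∀ s : Fin n, s.castSucc = t.succ → ℓ s ≠ d) :
    LastNonzeroIsOneAt w t.succ := by
  have entry (j : Fin n) : (w j.succ + if ℓ j = d then w j.castSucc else 0) =
      v j.succ + if ℓ j = ℓ t then v j.castSucc else 0 := by
    simpa only [vecMul_one_add_edgeMatrix_succ] using congrFun hvw j.succ
  refine ⟨by simpa [hd, hv.1, hv.2 _ t.castSucc_lt_succ] using entry t, fun j => ?_⟩
  induction j using Fin.induction with
  | zero => exact fun h => absurd h (Fin.not_lt_zero _)
  | succ j ih =>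
    intro htj
    have htj' : t < j := Fin.succ_lt_succ_iff.mp htj
    have hvj : v j.castSucc = 0 := hv.2 _ (Fin.castSucc_lt_castSucc_iff.mpr htj')
    have hvj' : v j.succ = 0 := hv.2 _ (t.castSucc_lt_succ.trans htj)
    have hw : (if ℓ j = d then w j.castSucc else 0) = 0 := by
      rcases (Fin.succ_le_castSucc_iff.mpr htj').eq_or_lt with h | h
      · exact if_neg (hd' j h.symm)
      · rw [ih h, ite_self]
    simpa only [hw, hvj, hvj', ite_self, add_zero] using entry j

variable {α : Type*} [DecidableEq α] [CommRing R] (p : ℕ) [Fact p.Prime] [CharP R p]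

variable (R) in
/-- The unitriangular matrix `1 + E c`, where `E c` is the transition matrix of `c` for the path
labelled by `ℓ`. -/
def edgeUnit (ℓ : Fin n → β) (c : β) :
    (unitriangular (Fin (n + 1)) R)ˣ :=
  unitriangular.toUnits p ⟨1 + edgeMatrix R ℓ c, one_add_edgeMatrix_mem_unitriangular ℓ c⟩

variable (R) in
/-- The unitriangular representation of the free group made to measure for the word `ℓ`. A letter
`c`, be it a generator or the inverse of one, is sent to `(1 + E c) (1 + E c⁻¹)⁻¹`. -/
def wordRep (ℓ : Fin n → α × Bool) :
    FreeGroup α →* (unitriangular (Fin (n + 1)) R)ˣ :=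
  FreeGroup.lift fun a => edgeUnit R p ℓ (a, true) / edgeUnit R p ℓ (a, false)

theorem wordRep_mk_singleton_mul_edgeUnit (ℓ : Fin n → α × Bool) (c : α × Bool) :
    wordRep R p ℓ (FreeGroup.mk [c]) * edgeUnit R p ℓ (c.1, !c.2) = edgeUnit R p ℓ c := by
  obtain ⟨a, _ | _⟩ := c <;> simp [wordRep, FreeGroup.lift_mk]

theorem wordRep_mk_concat_mul (ℓ : Fin n → α × Bool) (L : List (α × Bool)) (c : α × Bool) :
    (wordRep R p ℓ (FreeGroup.mk (L ++ [c]))).1.1 * (1 + edgeMatrix R ℓ (c.1, !c.2)) =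
      (wordRep R p ℓ (FreeGroup.mk L)).1.1 * (1 + edgeMatrix R ℓ c) := by
  have h : wordRep R p ℓ (FreeGroup.mk (L ++ [c])) * edgeUnit R p ℓ (c.1, !c.2) =
      wordRep R p ℓ (FreeGroup.mk L) * edgeUnit R p ℓ c := by
    rw [← FreeGroup.mul_mk, map_mul, mul_assoc, wordRep_mk_singleton_mul_edgeUnit]
  exact congrArg (fun g => g.1.1) h

theorem lastNonzeroIsOneAt_wordRep_take {L : List (α × Bool)} (hL : FreeGroup.IsReduced L)
    (t : Fin (L.length + 1)) :
    LastNonzeroIsOneAt ((wordRep R p L.get (FreeGroup.mk (L.take t))).1.1 0) t := by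
  induction t using Fin.induction with
  | zero =>
    rw [Fin.val_zero, List.take_zero, ← FreeGroup.one_eq_mk, map_one]
    exact ⟨one_apply_eq _, fun j hj => one_apply_ne hj.ne⟩
  | succ t ih =>
    have hstep := wordRep_mk_concat_mul p (R := R) L.get (L.take t) (L.get t)
    rw [List.get_eq_getElem, List.take_append_getElem] at hstep
    refine ih.succ (d := (L[t].1, !L[t].2)) (congrFun hstep 0) (fun h => ?_) (fun s hs h => ?_)
    · simpa using congrArg Prod.snd h
    · have hst : (s : ℕ) = t + 1 := by simpa using congrArg Fin.val hs
      have hts : L[t].1 = L[s].1 → L[t].2 = L[s].2 := by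
        simpa [← hst] using List.isChain_iff_getElem.mp hL t (by omega)
      have hs' : L[s] = (L[t].1, !L[t].2) := h
      simp [hs'] at hts

theorem wordRep_toWord_ne_one [Nontrivial R] {x : FreeGroup α} (hx : x ≠ 1) :
    wordRep R p x.toWord.get x ≠ 1 := by
  intro h
  have hlast := (lastNonzeroIsOneAt_wordRep_take p (R := R) (FreeGroup.isReduced_toWord (x := x))
    (Fin.last _)).1
  rw [Fin.val_last, List.take_length, FreeGroup.mk_toWord, h] at hlast
  have hne : (0 : Fin (x.toWord.length + 1)) ≠ Fin.last _ := by
    simpa [Fin.ext_iff, eq_comm] using hx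
  exact zero_ne_one ((one_apply_ne hne).symm.trans hlast)

end WordRepresentation

theorem subsingleton_of_isMulCommutative_freeGroup {ι : Type*} [IsMulCommutative (FreeGroup ι)] :
    Subsingleton ι := by
  classical
  refine ⟨fun a b => by_contra fun hab => ?_⟩
  let φ : FreeGroup ι →* Equiv.Perm (Fin 3) :=
    FreeGroup.lift fun x => if x = a then Equiv.swap 0 1 else Equiv.swap 1 2
  have h := congrArg φ (mul_comm' (FreeGroup.of a) (FreeGroup.of b))
  simp only [φ, map_mul, FreeGroup.lift_apply_of, if_neg (Ne.symm hab), if_true] at h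
  revert h
  decide

theorem isCyclic_of_isFreeGroup_of_isMulCommutative (G : Type*) [Group G] [IsFreeGroup G]
    [IsMulCommutative G] : IsCyclic G := by
  have : IsMulCommutative (FreeGroup (IsFreeGroup.Generators G)) :=
    IsMulCommutative.of_comm fun x y => (IsFreeGroup.mulEquiv G).injective <| by
      rw [map_mul, map_mul, mul_comm']
  have := subsingleton_of_isMulCommutative_freeGroup (ι := IsFreeGroup.Generators G)
  have : IsCyclic (FreeGroup (IsFreeGroup.Generators G)) := by
    cases isEmpty_or_nonempty (IsFreeGroup.Generators G)
    · infer_instance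
    · have := uniqueOfSubsingleton (Classical.arbitrary (IsFreeGroup.Generators G))
      infer_instance
  exact (IsFreeGroup.mulEquiv G).isCyclic.mp this

theorem exists_mem_zpowers_of_commute {G : Type*} [Group G] [IsFreeGroup G] {x y : G}
    (hxy : Commute x y) : ∃ w, x ∈ Subgroup.zpowers w ∧ y ∈ Subgroup.zpowers w := by
  have : IsMulCommutative (Subgroup.closure {x, y}) := Subgroup.isMulCommutative_closure <| by
    rintro a (rfl | rfl) b (rfl | rfl)
    exacts [rfl, hxy, hxy.symm, rfl]
  obtain ⟨w, hw⟩ := Subgroup.isCyclic_iff_exists_zpowers_eq_top _ |>.mp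
    (isCyclic_of_isFreeGroup_of_isMulCommutative (Subgroup.closure {x, y}))
  exact ⟨w, hw ▸ Subgroup.subset_closure (by simp), hw ▸ Subgroup.subset_closure (by simp)⟩

theorem NotProperPower.zpowers_eq {G : Type} [Group G] {u w : G} (hu : NotProperPower u)
    (h : u ∈ Subgroup.zpowers w) : Subgroup.zpowers u = Subgroup.zpowers w := by
  obtain ⟨k, rfl⟩ := h
  have hk : k ≠ 0 := by
    rintro rfl
    simpa using hu 1 2 (by simp)
  have hk' : k.natAbs = 1 := (hu w k rfl).antisymm (Int.natAbs_pos.mpr hk)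
  rcases Int.natAbs_eq_iff.mp hk' with rfl | rfl <;> simp

theorem NotProperPower.centralizer_eq_zpowers {G : Type} [Group G] [IsFreeGroup G] {u : G}
    (hu : NotProperPower u) : Subgroup.centralizer {u} = Subgroup.zpowers u := by
  refine le_antisymm (fun g hg => ?_) (Subgroup.zpowers_le.mpr ?_)
  · obtain ⟨w, hgw, huw⟩ := exists_mem_zpowers_of_commute
      (Subgroup.mem_centralizer_singleton_iff.mp hg)
    rwa [hu.zpowers_eq huw]
  · exact Subgroup.mem_centralizer_singleton_iff.mpr rfl

/-- A group is residually `p`-finite if each of its nontrivial elements survives in some finite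
`p`-group. As that group is finite, it may be taken in `Type`. -/
def IsResiduallyPFinite (p : ℕ) (G : Type*) [Group G] : Prop :=
  ∀ x : G, x ≠ 1 →
    ∃ (Q : Type) (_ : Group Q) (_ : Finite Q) (φ : G →* Q), IsPGroup p Q ∧ φ x ≠ 1

theorem freeGroup_isResiduallyPFinite (α : Type*) (p : ℕ) [Fact p.Prime] :
    IsResiduallyPFinite p (FreeGroup α) := by
  classical
  intro x hx
  have : Finite (unitriangular (Fin (x.toWord.length + 1)) (ZMod p)) := Subtype.finite
  exact ⟨_, inferInstance, inferInstance, wordRep (ZMod p) p x.toWord.get,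
    unitriangular.isPGroup_units p, wordRep_toWord_ne_one p hx⟩

open scoped commutatorElement in
theorem stmt7_general {G : Type*} [Group G] {p : ℕ} (hG : IsResiduallyPFinite p G)
    {S : Set G} {g : G} (hg : g ∉ Subgroup.centralizer S) :
    ∃ (Q : Type) (_ : Group Q) (_ : Finite Q) (φ : G →* Q),
      Function.Surjective φ ∧ IsPGroup p Q ∧ φ g ∉ (Subgroup.centralizer S).map φ := by
  obtain ⟨s, hs, hsg⟩ : ∃ s ∈ S, ¬ Commute s g := by
    simpa [Subgroup.mem_centralizer_iff, Commute, SemiconjBy] using hg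
  obtain ⟨Q, _, _, φ, hQ, hφ⟩ := hG ⁅s, g⁆ (mt commutatorElement_eq_one_iff_commute.mp hsg)
  refine ⟨φ.range, inferInstance, inferInstance, φ.rangeRestrict, φ.rangeRestrict_surjective,
    hQ.to_subgroup _, ?_⟩
  rintro ⟨z, hz, hzg⟩
  have hzg' : φ z = φ g := congrArg Subtype.val hzg
  have hsz : Commute s z := Subgroup.mem_centralizer_iff.mp hz s hs
  rw [map_commutatorElement, ← hzg'] at hφ
  exact hφ (commutatorElement_eq_one_iff_commute.mpr (hsz.map φ))

theorem stmt7 {α : Type} (u : FreeGroup α) (hu : NotProperPower u)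
    (p : ℕ) (hp : p.Prime) (g : FreeGroup α) (hg : g ∉ Subgroup.zpowers u) :
    ∃ (Q : Type) (_ : Group Q) (_ : Finite Q) (φ : FreeGroup α →* Q),
      Function.Surjective φ ∧ IsPGroup p Q ∧
      φ g ∉ (Subgroup.zpowers u).map φ := by
  have : Fact p.Prime := ⟨hp⟩
  rw [← hu.centralizer_eq_zpowers] at hg ⊢
  exact stmt7_general (freeGroup_isResiduallyPFinite α p) hg
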